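/- If limsup_{t→0} (η(t) − η(0))/φ(t) = 1 almost surely, then limsup_{t→0} (η(t)² − η(0)²)/φ(t) = 2 max(η(0), −η(0)) = 2|η(0)| almost surely. -/

import Mathlib

open MeasureTheory ProbabilityTheory Filter Set
open scoped NNReal ENNReal Topology

/-- Sharp description of a real limsup. -/
def LimsupChar (u : ℝ → ℝ) (L : ℝ) : Prop :=
  (∀ c, L < c → ∀ᶠ t in 𝓝[>] (0:ℝ), u t ≤ c) ∧ (∀ c, c < L → ∃ᶠ t in 𝓝[>] (0:ℝ), c < u t)

lemma LimsupChar.of_limsup {u : ℝ → ℝ} (h : Filter.limsup u (𝓝[>] (0:ℝ)) = 1) :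
    LimsupChar u 1 := by
  rw [Filter.limsup_eq] at h
  set S := {a : ℝ | ∀ᶠ t in 𝓝[>] (0:ℝ), u t ≤ a} with hS
  have hne : S.Nonempty := by
    by_contra hn
    rw [Set.not_nonempty_iff_eq_empty] at hn
    rw [hn, Real.sInf_empty] at h
    norm_num at h
  have hbd : BddBelow S := by
    by_contra hn
    rw [Real.sInf_of_not_bddBelow hn] at h
    norm_num at h
  constructor
  · intro c hc
    rw [← h] at hc
    obtain ⟨a, ha, hac⟩ := exists_lt_of_csInf_lt hne hc
    have ha' : ∀ᶠ t in 𝓝[>] (0:ℝ), u t ≤ a := ha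
    exact ha'.mono fun t ht => ht.trans hac.le
  · intro c hc hn
    have : c ∈ S := hn.mono fun t ht => not_lt.mp ht
    have := csInf_le hbd this
    linarith

lemma LimsupChar.limsup_eq {u : ℝ → ℝ} {L : ℝ} (h : LimsupChar u L) :
    Filter.limsup u (𝓝[>] (0:ℝ)) = L := by
  rw [Filter.limsup_eq]
  have hlb : ∀ b ∈ {a : ℝ | ∀ᶠ t in 𝓝[>] (0:ℝ), u t ≤ a}, L ≤ b := by
    intro b hb
    by_contra hn
    push Not at hn
    obtain ⟨t, ht, ht'⟩ := ((h.2 b hn).and_eventually hb).exists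
    linarith
  apply csInf_eq_of_forall_ge_of_forall_gt_exists_lt
  · exact ⟨L + 1, h.1 _ (by linarith)⟩
  · exact hlb
  · intro w hw
    exact ⟨(L + w) / 2, h.1 _ (by linarith), by linarith⟩

lemma LimsupChar.mul {v w : ℝ → ℝ} {M : ℝ} (h : LimsupChar v 1) (hM : 0 < M)
    (hw : Tendsto w (𝓝[>] (0:ℝ)) (𝓝 M)) : LimsupChar (fun t => v t * w t) M := by
  have hpos : ∀ᶠ t in 𝓝[>] (0:ℝ), 0 < w t := hw.eventually (lt_mem_nhds hM)
  constructor
  · intro c hc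
    obtain ⟨k, hk1, hk2⟩ := exists_between ((one_lt_div hM).mpr hc)
    have hk3 : k * M < c := (lt_div_iff₀ hM).mp hk2
    have := (hw.const_mul k).eventually (gt_mem_nhds hk3)
    filter_upwards [hpos, this, h.1 k hk1] with t h1 h2 h3
    nlinarith
  · intro c hc
    obtain ⟨k, hk1, hk2⟩ := exists_between ((div_lt_one hM).mpr hc)
    have hk3 : c < k * M := (div_lt_iff₀ hM).mp hk1
    have := (hw.const_mul k).eventually (lt_mem_nhds hk3)
    refine ((h.2 k hk2).and_eventually (hpos.and this)).mono ?_
    rintro t ⟨h1, h2, h3⟩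
    nlinarith

lemma eventually_zero_iff (p : ℝ → Prop) :
    (∀ᶠ t in 𝓝[>] (0:ℝ), p t) ↔ ∃ n : ℕ, ∀ t ∈ Ioo (0:ℝ) (1 / ((n:ℝ) + 1)), p t := by
  constructor
  · intro h
    obtain ⟨r, hr, hs⟩ := mem_nhdsGT_iff_exists_Ioo_subset.mp h
    obtain ⟨n, hn⟩ := exists_nat_one_div_lt (show (0:ℝ) < r from hr)
    exact ⟨n, fun t ht => hs ⟨ht.1, ht.2.trans hn⟩⟩
  · rintro ⟨n, hn⟩
    have h0 : (0:ℝ) < 1 / ((n:ℝ) + 1) := by positivity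
    filter_upwards [Ioo_mem_nhdsGT h0] with t ht using hn t ht

lemma limsupChar_iff (u : ℝ → ℝ) : LimsupChar u 1 ↔
    (∀ c : ℚ, (1:ℝ) < c → ∃ n : ℕ, ¬ ∃ t ∈ Ioo (0:ℝ) (1 / ((n:ℝ) + 1)), (c:ℝ) < u t) ∧
    (∀ c : ℚ, (c:ℝ) < 1 → ∀ n : ℕ, ∃ t ∈ Ioo (0:ℝ) (1 / ((n:ℝ) + 1)), (c:ℝ) < u t) := by
  constructor
  · intro h
    refine ⟨fun c hc => ?_, fun c hc n => ?_⟩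
    · obtain ⟨n, hn⟩ := (eventually_zero_iff _).mp (h.1 c hc)
      refine ⟨n, ?_⟩
      rintro ⟨t, ht, h'⟩
      exact absurd (hn t ht) (not_le.mpr h')
    · by_contra hcon
      refine h.2 c hc ((eventually_zero_iff _).mpr ⟨n, fun t ht h' => hcon ⟨t, ht, h'⟩⟩)
  · rintro ⟨h1, h2⟩
    refine ⟨fun c hc => ?_, fun c hc hn => ?_⟩
    · obtain ⟨q, hq1, hq2⟩ := exists_rat_btwn hc
      obtain ⟨n, hn⟩ := h1 q hq1
      refine (eventually_zero_iff _).mpr ⟨n, fun t ht => ?_⟩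
      by_contra h'
      exact hn ⟨t, ht, hq2.trans (not_le.mp h')⟩
    · obtain ⟨q, hq1, hq2⟩ := exists_rat_btwn hc
      obtain ⟨n, hn⟩ := (eventually_zero_iff _).mp hn
      obtain ⟨t, ht, h'⟩ := h2 q hq2 n
      exact hn t ht (hq1.trans h')

/-- Increment ratio of a path on the unit interval. -/
noncomputable def incRatio (φ : ℝ → ℝ) (x : Icc (0:ℝ) 1 → ℝ) (t : ℝ) : ℝ :=
  (x (projIcc 0 1 zero_le_one t) - x ⟨0, left_mem_Icc.mpr zero_le_one⟩) / φ t

lemma exists_measurable_set (φ : ℝ → ℝ) : ∃ A : Set (Icc (0:ℝ) 1 → ℝ), MeasurableSet A ∧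
    ∀ x : C(Icc (0:ℝ) 1, ℝ), (⇑x ∈ A ↔ LimsupChar (incRatio φ x) 1) := by
  have key : ∀ (c : ℚ) (n : ℕ), ∃ T : Set ℝ, T.Countable ∧ ∀ x : C(Icc (0:ℝ) 1, ℝ),
      ((∃ t ∈ T, (c:ℝ) < incRatio φ x t) ↔
        ∃ t ∈ Ioo (0:ℝ) (1 / ((n:ℝ) + 1)), (c:ℝ) < incRatio φ x t) := by
    intro c n
    have ho : ∀ t ∈ Ioo (0:ℝ) (1 / ((n:ℝ) + 1)),
        IsOpen {x : C(Icc (0:ℝ) 1, ℝ) | (c:ℝ) < incRatio φ x t} := by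
      intro t _
      apply isOpen_lt continuous_const
      unfold incRatio
      exact ((continuous_eval_const _).sub
        (continuous_eval_const _)).div_const _
    obtain ⟨T, hTs, hTc, hT⟩ := TopologicalSpace.isOpen_biUnion_countable _ _ ho
    refine ⟨T, hTc, fun x => ?_⟩
    have := Set.ext_iff.mp hT x
    simpa only [mem_iUnion, mem_ofPred_eq, exists_prop] using this
  choose T hTc hT using key
  have hm : ∀ t, Measurable fun x : Icc (0:ℝ) 1 → ℝ => incRatio φ x t := by
    intro t
    unfold incRatio
    fun_prop
  have hmG : ∀ c n, MeasurableSet {x : Icc (0:ℝ) 1 → ℝ | ∃ t ∈ T c n, (c:ℝ) < incRatio φ x t} := by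
    intro c n
    have : {x : Icc (0:ℝ) 1 → ℝ | ∃ t ∈ T c n, (c:ℝ) < incRatio φ x t}
        = ⋃ t ∈ T c n, {x | (c:ℝ) < incRatio φ x t} := by
      ext x; simp
    rw [this]
    exact MeasurableSet.biUnion (hTc c n) fun t _ => measurableSet_lt measurable_const (hm t)
  refine ⟨{x | (∀ c : ℚ, (1:ℝ) < c → ∃ n : ℕ, ¬ ∃ t ∈ T c n, (c:ℝ) < incRatio φ x t) ∧
    (∀ c : ℚ, (c:ℝ) < 1 → ∀ n : ℕ, ∃ t ∈ T c n, (c:ℝ) < incRatio φ x t)}, ?_, ?_⟩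
  · apply MeasurableSet.inter
    · have e : {x : Icc (0:ℝ) 1 → ℝ | ∀ c : ℚ, (1:ℝ) < c → ∃ n : ℕ, ¬ ∃ t ∈ T c n,
          (c:ℝ) < incRatio φ x t} = ⋂ (c : ℚ), ⋂ (_ : (1:ℝ) < c), ⋃ n : ℕ,
            {x : Icc (0:ℝ) 1 → ℝ | ∃ t ∈ T c n, (c:ℝ) < incRatio φ x t}ᶜ := by
        ext x
        simp only [mem_iInter, mem_iUnion, mem_compl_iff, mem_ofPred_eq]
      refine MeasurableSet.congr ?_ e.symm
      refine MeasurableSet.iInter fun c => MeasurableSet.iInter fun _ => MeasurableSet.iUnion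
        fun n => ?_
      exact (hmG c n).compl
    · have e : {x : Icc (0:ℝ) 1 → ℝ | ∀ c : ℚ, (c:ℝ) < 1 → ∀ n : ℕ, ∃ t ∈ T c n,
          (c:ℝ) < incRatio φ x t} = ⋂ (c : ℚ), ⋂ (_ : (c:ℝ) < 1), ⋂ n : ℕ,
            {x : Icc (0:ℝ) 1 → ℝ | ∃ t ∈ T c n, (c:ℝ) < incRatio φ x t} := by
        ext x
        simp only [mem_iInter, mem_ofPred_eq]
      refine MeasurableSet.congr ?_ e.symm
      exact MeasurableSet.iInter fun c => MeasurableSet.iInter fun _ => MeasurableSet.iInter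
        fun n => hmG c n
  · intro x
    rw [limsupChar_iff]
    simp only [mem_ofPred_eq, hT]

lemma path_symm {Ω : Type*} [MeasurableSpace Ω] (P : Measure Ω) [IsProbabilityMeasure P]
    (X : Icc (0:ℝ) 1 → Ω → ℝ) (hmeas : ∀ t, Measurable (X t))
    (hG : ∀ (n : ℕ) (t : Fin n → Icc (0:ℝ) 1) (a : Fin n → ℝ),
      ∃ v : ℝ≥0, Measure.map (fun ω => ∑ j, a j * X (t j) ω) P = gaussianReal 0 v) :
    P.map (fun ω t => X t ω) = P.map (fun ω t => - X t ω) := by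
  have h1 : Measurable (fun ω t => X t ω) := measurable_pi_lambda _ hmeas
  have h2 : Measurable (fun ω t => - X t ω) := measurable_pi_lambda _ fun t => (hmeas t).neg
  refine (map_eq_iff_forall_finset_map_restrict_eq (X := X) (Y := fun t ω => - X t ω)
    h1.aemeasurable h2.aemeasurable).mpr fun I => ?_
  have m1 : Measurable (fun ω => I.restrict (fun t => X t ω)) :=
    (Finset.measurable_restrict I).comp h1
  have m2 : Measurable (fun ω => I.restrict (fun t => - X t ω)) :=
    (Finset.measurable_restrict I).comp h2
  have := Measure.isProbabilityMeasure_map (μ := P) m1.aemeasurable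
  have := Measure.isProbabilityMeasure_map (μ := P) m2.aemeasurable
  apply Measure.ext_of_charFunDual
  ext L
  rw [charFunDual_eq_charFun_map_one, charFunDual_eq_charFun_map_one]
  congr 1
  have hL : Measurable L := L.continuous.measurable
  rw [Measure.map_map hL m1, Measure.map_map hL m2]
  have e2 : (L ∘ fun ω => I.restrict (fun t => - X t ω))
      = (fun y : ℝ => -y) ∘ (L ∘ fun ω => I.restrict (fun t => X t ω)) := by
    funext ω
    simp only [Function.comp_apply]
    rw [← map_neg]
    rfl
  rw [e2, ← Measure.map_map measurable_neg (hL.comp m1)]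
  obtain ⟨v, hv⟩ := hG (Fintype.card I) (fun j => ((Fintype.equivFin I).symm j : Icc (0:ℝ) 1))
    (fun j => L (Pi.single ((Fintype.equivFin I).symm j) 1))
  have e1 : (L ∘ fun ω => I.restrict (fun t => X t ω)) = fun ω => ∑ j,
      L (Pi.single ((Fintype.equivFin I).symm j) 1) * X ((Fintype.equivFin I).symm j) ω := by
    funext ω
    rw [(Fintype.equivFin I).symm.sum_comp (fun i => L (Pi.single i 1) * X i ω)]
    simp only [Function.comp_apply]
    conv_lhs => rw [pi_eq_sum_univ' (I.restrict (fun t => X t ω))]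
    rw [map_sum]
    refine Finset.sum_congr rfl fun i _ => ?_
    rw [map_smul, smul_eq_mul, mul_comm]
    rfl
  rw [e1, hv, gaussianReal_map_neg, neg_zero]

/-- If `limsup_{t→0} (η(t) − η(0))/φ(t) = 1` a.s., then
`limsup_{t→0} (η(t)² − η(0)²)/φ(t) = 2 max(η(0), −η(0)) = 2|η(0)|` a.s. -/
theorem chi_square_order_one_local_modulus
    {Ω : Type*} [MeasurableSpace Ω] (P : Measure Ω) [IsProbabilityMeasure P]
    (η : ℝ → Ω → ℝ)
    (hmeas : ∀ t, Measurable (η t))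
    (hGauss : ∀ (n : ℕ) (t : Fin n → ℝ) (a : Fin n → ℝ), (∀ j, t j ∈ Icc (0:ℝ) 1) →
      ∃ v : ℝ≥0, Measure.map (fun ω => ∑ j, a j * η (t j) ω) P = gaussianReal 0 v)
    (hcont : ∀ ω, ContinuousOn (fun t => η t ω) (Icc (0:ℝ) 1))
    (U : ℝ → ℝ → ℝ) (hU : ∀ s t, U s t = ∫ ω, η s ω * η t ω ∂P)
    (hU0 : 0 < U 0 0)
    (δ : ℝ) (hδ : 0 < δ) (φ : ℝ → ℝ) (hφ : ∀ t ∈ Icc (0:ℝ) δ, 0 < φ t)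
    (hlimsup : ∀ᵐ ω ∂P,
      Filter.limsup (fun t => (η t ω - η 0 ω) / φ t) (𝓝[>] (0:ℝ)) = 1) :
    ∀ᵐ ω ∂P,
      Filter.limsup (fun t => ((η t ω) ^ 2 - (η 0 ω) ^ 2) / φ t) (𝓝[>] (0:ℝ))
          = 2 * max (η 0 ω) (-(η 0 ω))
        ∧ Filter.limsup (fun t => ((η t ω) ^ 2 - (η 0 ω) ^ 2) / φ t) (𝓝[>] (0:ℝ))
          = 2 * |η 0 ω| := by
  have h0mem : (0:ℝ) ∈ Icc (0:ℝ) 1 := left_mem_Icc.mpr zero_le_one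
  -- the value at zero is a.s. nonzero
  have hne : ∀ᵐ ω ∂P, η 0 ω ≠ 0 := by
    obtain ⟨v, hv⟩ := hGauss 1 (fun _ => 0) (fun _ => 1) (fun _ => h0mem)
    simp only [Finset.univ_unique, Finset.sum_const, Finset.card_singleton, one_smul, one_mul] at hv
    change Measure.map (η 0) P = _ at hv
    have hv0 : v ≠ 0 := by
      rintro rfl
      rw [gaussianReal_zero_var] at hv
      have : ∫ ω, η 0 ω * η 0 ω ∂P = 0 := by
        rw [← integral_map (μ := P) (φ := η 0) (f := fun y => y * y) (hmeas 0).aemeasurable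
          (by fun_prop), hv]
        simp
      rw [hU, this] at hU0
      exact lt_irrefl _ hU0
    have := nullSingletonClass_gaussianReal (μ := 0) hv0
    have hz : (Measure.map (η 0) P) {0} = 0 := by rw [hv]; exact measure_singleton 0
    rw [Measure.map_apply (hmeas 0) (measurableSet_singleton 0)] at hz
    exact measure_eq_zero_iff_ae_notMem.mp hz
  obtain ⟨A, hA, hAx⟩ := exists_measurable_set φ
  have hproj : ∀ᶠ t in 𝓝[>] (0:ℝ), t ∈ Icc (0:ℝ) 1 := by
    filter_upwards [Ioo_mem_nhdsGT (zero_lt_one' ℝ)] with t ht using ⟨ht.1.le, ht.2.le⟩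
  let X : Icc (0:ℝ) 1 → Ω → ℝ := fun t ω => η t ω
  let x : Ω → C(Icc (0:ℝ) 1, ℝ) := fun ω => ⟨fun t => η t ω, (hcont ω).domRestrict⟩
  have hXm : ∀ t, Measurable (X t) := fun t => hmeas t
  have hsymm := path_symm P X hXm (fun n t a => hGauss n (fun j => t j) a (fun j => (t j).2))
  have hinc : ∀ ω, incRatio φ (x ω) =ᶠ[𝓝[>] (0:ℝ)] fun t => (η t ω - η 0 ω) / φ t := by
    intro ω
    filter_upwards [hproj] with t ht
    simp only [incRatio, projIcc_of_mem zero_le_one ht]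
    rfl
  have hinc' : ∀ ω, incRatio φ (-(x ω)) =ᶠ[𝓝[>] (0:ℝ)] fun t => (-η t ω - -η 0 ω) / φ t := by
    intro ω
    filter_upwards [hproj] with t ht
    simp only [incRatio, projIcc_of_mem zero_le_one ht]
    rfl
  have hcongr : ∀ {u v : ℝ → ℝ}, u =ᶠ[𝓝[>] (0:ℝ)] v → LimsupChar u 1 → LimsupChar v 1 := by
    intro u v huv h
    refine ⟨fun c hc => ?_, fun c hc => ?_⟩
    · filter_upwards [huv, h.1 c hc] with t h1 h2
      rwa [← h1]
    · refine ((h.2 c hc).and_eventually huv).mono ?_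
      rintro t ⟨h1, h2⟩
      rwa [← h2]
  have hpos : ∀ᵐ ω ∂P, LimsupChar (fun t => (η t ω - η 0 ω) / φ t) 1 := by
    filter_upwards [hlimsup] with ω h using LimsupChar.of_limsup h
  have hposA : ∀ᵐ ω ∂P, (fun t => X t ω) ∈ A := by
    filter_upwards [hpos] with ω h
    exact (hAx (x ω)).mpr (hcongr (hinc ω).symm h)
  have hneg : ∀ᵐ ω ∂P, LimsupChar (fun t => (-η t ω - -η 0 ω) / φ t) 1 := by
    have h1 : Measurable (fun ω t => X t ω) := measurable_pi_lambda _ hXm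
    have h2 : Measurable (fun ω t => - X t ω) := measurable_pi_lambda _ fun t => (hXm t).neg
    have h3 : ∀ᵐ y ∂(P.map (fun ω t => X t ω)), y ∈ A :=
      (ae_map_iff h1.aemeasurable hA).mpr hposA
    rw [hsymm] at h3
    have h4 := (ae_map_iff h2.aemeasurable hA).mp h3
    filter_upwards [h4] with ω h
    exact hcongr (hinc' ω) ((hAx (-(x ω))).mp h)
  filter_upwards [hne, hpos, hneg] with ω h0 hp hn
  have hmain : Filter.limsup (fun t => ((η t ω) ^ 2 - (η 0 ω) ^ 2) / φ t) (𝓝[>] (0:ℝ))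
      = 2 * |η 0 ω| := by
    have hc : Tendsto (fun t => η t ω) (𝓝[>] (0:ℝ)) (𝓝 (η 0 ω)) := by
      have := (hcont ω) 0 h0mem
      exact this.mono_left (nhdsWithin_le_iff.mpr hproj)
    rcases lt_or_gt_of_ne h0 with h | h
    · rw [abs_of_neg h]
      have hw : Tendsto (fun t => -(η t ω) + -(η 0 ω)) (𝓝[>] (0:ℝ)) (𝓝 (2 * -(η 0 ω))) := by
        rw [two_mul]
        exact hc.neg.add_const _
      have := (hn.mul (by linarith) hw).limsup_eq
      rw [← this]
      congr 1
      funext t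
      ring
    · rw [abs_of_pos h]
      have hw : Tendsto (fun t => η t ω + η 0 ω) (𝓝[>] (0:ℝ)) (𝓝 (2 * η 0 ω)) := by
        rw [two_mul]
        exact hc.add_const _
      have := (hp.mul (by linarith) hw).limsup_eq
      rw [← this]
      congr 1
      funext t
      ring
  exact ⟨hmain, hmain⟩
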